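/- Let γ > 0, let M ∈ ℝ_{≥0}^{n×s}, and let p ∈ Σ_n have strictly positive entries. Let K = e^{−M/γ} entrywise. Then the function H_p*(g) = sup_{q ∈ Σ_s} (⟨g,q⟩ − W_γ(p,q)) is differentiable at every g ∈ ℝ^s, with gradient ∇H_p*(g) = α ⊙ Kᵀ (p ⊘ Kα), where α = e^{g/γ} entrywise, ⊙ denotes entrywise product and ⊘ entrywise division; moreover this gradient is the unique maximizer q ∈ Σ_s of ⟨g,q⟩ − W_γ(p,q). -/

import Mathlib

open Finset

noncomputable section

/-- The simplex Σ_n: nonnegative vectors in ℝ^n summing to 1. -/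
def simplex (n : ℕ) : Set (Fin n → ℝ) :=
  {p | (∀ i, 0 ≤ p i) ∧ ∑ i, p i = 1}

/-- The transport polytope U(p,q): nonnegative n×s matrices with row sums p
and column sums q. -/
def transportPolytope {n s : ℕ} (p : Fin n → ℝ) (q : Fin s → ℝ) :
    Set (Matrix (Fin n) (Fin s) ℝ) :=
  {T | (∀ i j, 0 ≤ T i j) ∧ (∀ i, ∑ j, T i j = p i) ∧ (∀ j, ∑ i, T i j = q j)}

/-- Frobenius inner product ⟨T,M⟩ = Σ_{i,j} T_{ij} M_{ij}. -/
def frob {n s : ℕ} (T M : Matrix (Fin n) (Fin s) ℝ) : ℝ :=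
  ∑ i, ∑ j, T i j * M i j

/-- The entropy h(T) = −Σ_{i,j} T_{ij} log T_{ij} (Real.log 0 = 0, so 0 log 0 = 0). -/
def entropy {n s : ℕ} (T : Matrix (Fin n) (Fin s) ℝ) : ℝ :=
  -∑ i, ∑ j, T i j * Real.log (T i j)

/-- The Wasserstein distance W(p,q) = inf_{T ∈ U(p,q)} ⟨T,M⟩. -/
def W {n s : ℕ} (M : Matrix (Fin n) (Fin s) ℝ) (p : Fin n → ℝ) (q : Fin s → ℝ) : ℝ :=
  sInf ((fun T => frob T M) '' transportPolytope p q)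

/-- The smoothed Wasserstein distance W_γ(p,q) = inf_{T ∈ U(p,q)} ⟨T,M⟩ − γ h(T). -/
def Wsmooth {n s : ℕ} (γ : ℝ) (M : Matrix (Fin n) (Fin s) ℝ)
    (p : Fin n → ℝ) (q : Fin s → ℝ) : ℝ :=
  sInf ((fun T => frob T M - γ * entropy T) '' transportPolytope p q)

/-- K = e^{−M/γ}, entrywise. -/
def Kmat {n s : ℕ} (γ : ℝ) (M : Matrix (Fin n) (Fin s) ℝ) : Matrix (Fin n) (Fin s) ℝ :=
  fun i j => Real.exp (-M i j / γ)

/-- Legendre–Fenchel conjugate H_p*(g) = sup_{q ∈ Σ_s} (⟨g,q⟩ − W_γ(p,q)). -/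
def Hstar {n s : ℕ} (γ : ℝ) (M : Matrix (Fin n) (Fin s) ℝ)
    (p : Fin n → ℝ) (g : Fin s → ℝ) : ℝ :=
  sSup ((fun q => (∑ j, g j * q j) - Wsmooth γ M p q) '' simplex s)

/-- The gradient formula ∇H_p*(g) = α ⊙ Kᵀ (p ⊘ Kα), where α = e^{g/γ} entrywise. -/
def HstarGrad {n s : ℕ} (γ : ℝ) (M : Matrix (Fin n) (Fin s) ℝ)
    (p : Fin n → ℝ) (g : Fin s → ℝ) : Fin s → ℝ :=
  fun j => Real.exp (g j / γ) *
    Matrix.mulVec (Kmat γ M).transpose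
      (fun i => p i / Matrix.mulVec (Kmat γ M) (fun j' => Real.exp (g j' / γ)) i) j

/-!
Row by row, `⟨g,q⟩ − (⟨T,M⟩ − γ h(T))` splits into the free energies `⟨Tᵢ, g − Mᵢ⟩ + γ h(Tᵢ)` of
rows of prescribed mass `pᵢ`. By the Gibbs variational principle, each is at most
`pᵢ * logSumExp γ (g − Mᵢ) − γ * (pᵢ * log pᵢ)`, with equality only for the softmax of `g − Mᵢ`
scaled to mass `pᵢ`: the gap is `γ` times a relative entropy. Hence `H_p*(g)` is, up to a constant,
a `p`-weighted sum of log-sum-exps, whose gradient is the weighted sum of the softmaxes, i.e. the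
second marginal of the optimal plan. Since `W_γ(p,q)` is attained by compactness of `U(p,q)`, the
equality case gives the uniqueness of the maximizer.
-/

section Gibbs

open Real InformationTheory

variable {ι : Type*} [Fintype ι] {γ : ℝ}

/-- The log-sum-exp function at temperature `γ`. -/
def logSumExp (γ : ℝ) (x : ι → ℝ) : ℝ :=
  γ * log (∑ j, exp (x j / γ))

/-- The softmax (Gibbs distribution) at temperature `γ`, the gradient of `logSumExp γ`. -/
def softmax (γ : ℝ) (x : ι → ℝ) (j : ι) : ℝ :=
  exp (x j / γ) / ∑ k, exp (x k / γ)

/-- The free energy `⟨t,x⟩ + γ h(t)` at temperature `γ` of a vector `t` of arbitrary mass, signed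
so that it is concave in `t` and maximized in equilibrium. -/
def freeEnergy (γ : ℝ) (x t : ι → ℝ) : ℝ :=
  ∑ j, (t j * x j + γ * negMulLog (t j))

lemma mul_klFun_div_nonneg {s t : ℝ} (hs : 0 ≤ s) (ht : 0 ≤ t) : 0 ≤ s * klFun (t / s) :=
  mul_nonneg hs (klFun_nonneg (div_nonneg ht hs))

lemma mul_klFun_div_eq_zero_iff {s t : ℝ} (hs : 0 < s) (ht : 0 ≤ t) :
    s * klFun (t / s) = 0 ↔ t = s := by
  rw [mul_eq_zero_iff_left hs.ne', klFun_eq_zero_iff (div_nonneg ht hs.le),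
    div_eq_one_iff_eq hs.ne']

variable [Nonempty ι]

lemma sum_exp_pos (x : ι → ℝ) : 0 < ∑ j, exp (x j) :=
  sum_pos (fun _ _ => exp_pos _) univ_nonempty

lemma softmax_pos (γ : ℝ) (x : ι → ℝ) (j : ι) : 0 < softmax γ x j :=
  div_pos (exp_pos _) (sum_exp_pos _)

lemma sum_softmax (γ : ℝ) (x : ι → ℝ) : ∑ j, softmax γ x j = 1 := by
  simp only [softmax]
  rw [← sum_div, div_self (sum_exp_pos _).ne']

lemma mul_log_softmax (hγ : γ ≠ 0) (x : ι → ℝ) (j : ι) :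
    γ * log (softmax γ x j) = x j - logSumExp γ x := by
  rw [softmax, logSumExp, log_div (exp_ne_zero _) (sum_exp_pos _).ne', log_exp, mul_sub,
    mul_div_cancel₀ _ hγ]

lemma hasFDerivAt_logSumExp (hγ : γ ≠ 0) (x : ι → ℝ) :
    HasFDerivAt (logSumExp γ)
      (∑ j, softmax γ x j • (ContinuousLinearMap.proj j : (ι → ℝ) →L[ℝ] ℝ)) x := by
  have hasFDerivAt_sum_exp : HasFDerivAt (fun y : ι → ℝ => ∑ j, exp (y j / γ))
      (∑ j, exp (x j / γ) • γ⁻¹ • (ContinuousLinearMap.proj j : (ι → ℝ) →L[ℝ] ℝ)) x := by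
    simp only [div_eq_mul_inv]
    exact HasFDerivAt.fun_sum fun j _ => ((hasFDerivAt_apply j x).mul_const γ⁻¹).exp
  refine ((hasFDerivAt_sum_exp.log (sum_exp_pos _).ne').const_mul γ).congr_fderiv ?_
  simp only [softmax, smul_sum, smul_smul]
  refine sum_congr rfl fun j _ => ?_
  congr 1
  field_simp

/-- The remainder `t - m * softmax γ x j` cancels in the sum over a vector `t` of mass `m`. -/
lemma mul_add_mul_negMulLog_eq_sub_klFun (hγ : γ ≠ 0) (x : ι → ℝ) (j : ι) {m t : ℝ}
    (ht : m = 0 → t = 0) :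
    t * x j + γ * negMulLog t =
      t * (logSumExp γ x - γ * log m) -
        γ * (m * softmax γ x j * klFun (t / (m * softmax γ x j)) + (t - m * softmax γ x j)) := by
  rcases eq_or_ne t 0 with rfl | ht₀
  · simp [klFun_zero]
  have hm : m ≠ 0 := mt ht ht₀
  have hσ := (softmax_pos γ x j).ne'
  rw [klFun_apply, log_div ht₀ (mul_ne_zero hm hσ), log_mul hm hσ, negMulLog]
  field_simp
  linear_combination -t * mul_log_softmax hγ x j

lemma freeEnergy_eq_sub (hγ : γ ≠ 0) (x : ι → ℝ) {t : ι → ℝ} {m : ℝ} (ht : ∀ j, 0 ≤ t j)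
    (hm : ∑ j, t j = m) :
    freeEnergy γ x t = m * logSumExp γ x + γ * negMulLog m -
      γ * ∑ j, m * softmax γ x j * klFun (t j / (m * softmax γ x j)) := by
  have eq_zero_of_mass_eq_zero (j : ι) (hm₀ : m = 0) : t j = 0 :=
    (sum_eq_zero_iff_of_nonneg fun i _ => ht i).1 (hm.trans hm₀) j (mem_univ j)
  simp only [freeEnergy, mul_add_mul_negMulLog_eq_sub_klFun hγ x _ (eq_zero_of_mass_eq_zero _)]
  rw [sum_sub_distrib, ← sum_mul, ← mul_sum, sum_add_distrib, sum_sub_distrib, ← mul_sum,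
    sum_softmax, hm, negMulLog]
  ring

theorem freeEnergy_le (hγ : 0 < γ) (x : ι → ℝ) {t : ι → ℝ} {m : ℝ} (ht : ∀ j, 0 ≤ t j)
    (hm : ∑ j, t j = m) :
    freeEnergy γ x t ≤ m * logSumExp γ x + γ * negMulLog m := by
  have hm₀ : 0 ≤ m := hm ▸ sum_nonneg fun j _ => ht j
  rw [freeEnergy_eq_sub hγ.ne' x ht hm]
  exact sub_le_self _ <| mul_nonneg hγ.le <| sum_nonneg fun j _ =>
    mul_klFun_div_nonneg (mul_nonneg hm₀ (softmax_pos γ x j).le) (ht j)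

theorem freeEnergy_eq_iff (hγ : 0 < γ) (x : ι → ℝ) {t : ι → ℝ} {m : ℝ} (ht : ∀ j, 0 ≤ t j)
    (hm : ∑ j, t j = m) :
    freeEnergy γ x t = m * logSumExp γ x + γ * negMulLog m ↔ t = m • softmax γ x := by
  have hm₀ : 0 ≤ m := hm ▸ sum_nonneg fun j _ => ht j
  have gap_nonneg (j : ι) : 0 ≤ m * softmax γ x j * klFun (t j / (m * softmax γ x j)) :=
    mul_klFun_div_nonneg (mul_nonneg hm₀ (softmax_pos γ x j).le) (ht j)
  rw [freeEnergy_eq_sub hγ.ne' x ht hm, sub_eq_self, mul_eq_zero_iff_left hγ.ne',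
    sum_eq_zero_iff_of_nonneg fun j _ => gap_nonneg j, funext_iff]
  refine forall_congr' fun j => ?_
  simp only [mem_univ, true_imp_iff, Pi.smul_apply, smul_eq_mul]
  rcases hm₀.eq_or_lt with rfl | hm_pos
  · have ht₀ := (sum_eq_zero_iff_of_nonneg fun i _ => ht i).1 hm j (mem_univ j)
    simp [ht₀]
  · exact mul_klFun_div_eq_zero_iff (mul_pos hm_pos (softmax_pos γ x j)) (ht j)

end Gibbs

section TransportPolytope

variable {n s : ℕ} {p : Fin n → ℝ} {q : Fin s → ℝ}

lemma mem_simplex_of_mem_transportPolytope {T : Matrix (Fin n) (Fin s) ℝ} (hp : p ∈ simplex n)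
    (hT : T ∈ transportPolytope p q) : q ∈ simplex s := by
  obtain ⟨hT_nonneg, hT_row, hT_col⟩ := hT
  refine ⟨fun j => hT_col j ▸ sum_nonneg fun i _ => hT_nonneg i j, ?_⟩
  calc ∑ j, q j = ∑ j, ∑ i, T i j := by simp only [hT_col]
    _ = ∑ i, p i := by rw [sum_comm]; simp only [hT_row]
    _ = 1 := hp.2

lemma transportPolytope_nonempty (hp : p ∈ simplex n) (hq : q ∈ simplex s) :
    (transportPolytope p q).Nonempty := by
  refine ⟨Matrix.vecMulVec p q, fun i j => mul_nonneg (hp.1 i) (hq.1 j), fun i => ?_, fun j => ?_⟩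
  · simp only [Matrix.vecMulVec_apply, ← mul_sum, hq.2, mul_one]
  · simp only [Matrix.vecMulVec_apply, ← sum_mul, hp.2, one_mul]

lemma isClosed_transportPolytope (p : Fin n → ℝ) (q : Fin s → ℝ) :
    IsClosed (transportPolytope p q) := by
  simp only [transportPolytope, Set.ofPred_and, Set.ofPred_forall]
  refine (isClosed_iInter fun i => isClosed_iInter fun j => ?_).inter
    ((isClosed_iInter fun i => ?_).inter (isClosed_iInter fun j => ?_))
  · exact isClosed_le continuous_const (by fun_prop)
  · exact isClosed_eq (by fun_prop) continuous_const
  · exact isClosed_eq (by fun_prop) continuous_const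

lemma isCompact_transportPolytope (p : Fin n → ℝ) (q : Fin s → ℝ) :
    IsCompact (transportPolytope p q) := by
  have isCompact_box : IsCompact (Set.univ.pi fun i : Fin n => Set.univ.pi fun _ : Fin s =>
      Set.Icc 0 (p i)) :=
    isCompact_univ_pi fun i => isCompact_univ_pi fun _ => isCompact_Icc
  refine isCompact_box.of_isClosed_subset (isClosed_transportPolytope p q) ?_
  rintro T ⟨hT_nonneg, hT_row, -⟩ i - j -
  exact ⟨hT_nonneg i j, hT_row i ▸ single_le_sum (fun k _ => hT_nonneg i k) (mem_univ j)⟩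

lemma continuous_frob_sub_entropy (γ : ℝ) (M : Matrix (Fin n) (Fin s) ℝ) :
    Continuous fun T => frob T M - γ * entropy T := by
  unfold frob entropy
  fun_prop

lemma isLeast_Wsmooth (γ : ℝ) (M : Matrix (Fin n) (Fin s) ℝ) (hp : p ∈ simplex n)
    (hq : q ∈ simplex s) :
    IsLeast ((fun T => frob T M - γ * entropy T) '' transportPolytope p q) (Wsmooth γ M p q) :=
  ((isCompact_transportPolytope p q).image (continuous_frob_sub_entropy γ M)).isLeast_sInf
    ((transportPolytope_nonempty hp hq).image _)

end TransportPolytope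

section Conjugate

variable {n s : ℕ} {γ : ℝ} {p : Fin n → ℝ} {q : Fin s → ℝ}

/-- The optimal plan for the potential `g`: row `i` is the Gibbs distribution of `g − M i` scaled to
mass `p i`. In the scaling form of optimal transport it is `diag(p ⊘ Kα) K diag(α)`. -/
def gibbsPlan (γ : ℝ) (M : Matrix (Fin n) (Fin s) ℝ) (p : Fin n → ℝ) (g : Fin s → ℝ) :
    Matrix (Fin n) (Fin s) ℝ :=
  Matrix.of fun i => p i • softmax γ (g - M.row i)

/-- The closed form `γ (h(p) + ⟨p, log Kα⟩)` of `H_p*(g)`. -/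
def conjugateFormula (γ : ℝ) (M : Matrix (Fin n) (Fin s) ℝ) (p : Fin n → ℝ) (g : Fin s → ℝ) : ℝ :=
  ∑ i, (p i * logSumExp γ (g - M.row i) + γ * Real.negMulLog (p i))

lemma gibbsPlan_apply (γ : ℝ) (M : Matrix (Fin n) (Fin s) ℝ) (p : Fin n → ℝ) (g : Fin s → ℝ)
    (i : Fin n) (j : Fin s) : gibbsPlan γ M p g i j = p i * softmax γ (g - M.row i) j :=
  rfl

lemma sum_gibbsPlan_col (γ : ℝ) (M : Matrix (Fin n) (Fin s) ℝ) (p : Fin n → ℝ) (g : Fin s → ℝ)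
    (j : Fin s) : ∑ i, gibbsPlan γ M p g i j = HstarGrad γ M p g j := by
  have exp_sub_div (i : Fin n) (k : Fin s) :
      Real.exp ((g k - M i k) / γ) = Real.exp (-M i k / γ) * Real.exp (g k / γ) := by
    rw [← Real.exp_add, ← add_div, neg_add_eq_sub]
  simp only [gibbsPlan_apply, softmax, HstarGrad, Kmat, Matrix.mulVec, dotProduct,
    Matrix.transpose_apply, Pi.sub_apply, Matrix.row_apply, exp_sub_div, mul_sum]
  exact sum_congr rfl fun i _ => by ring

lemma sub_frob_sub_entropy_eq_sum_freeEnergy (γ : ℝ) (M : Matrix (Fin n) (Fin s) ℝ) (g : Fin s → ℝ)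
    {T : Matrix (Fin n) (Fin s) ℝ} (hT : T ∈ transportPolytope p q) :
    (∑ j, g j * q j) - (frob T M - γ * entropy T) = ∑ i, freeEnergy γ (g - M.row i) (T.row i) := by
  have sum_mul_col : ∑ j, g j * q j = ∑ i, ∑ j, g j * T i j := by
    rw [sum_comm]
    simp only [← mul_sum, hT.2.2]
  simp only [sum_mul_col, frob, entropy, freeEnergy, Real.negMulLog, ← sum_neg_distrib, mul_sum,
    ← sum_sub_distrib, Pi.sub_apply, Matrix.row_apply]
  exact sum_congr rfl fun i _ => sum_congr rfl fun j _ => by ring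

variable [Nonempty (Fin s)]

lemma gibbsPlan_mem_transportPolytope (γ : ℝ) (M : Matrix (Fin n) (Fin s) ℝ) (hp : ∀ i, 0 ≤ p i)
    (g : Fin s → ℝ) : gibbsPlan γ M p g ∈ transportPolytope p (HstarGrad γ M p g) := by
  refine ⟨fun i j => mul_nonneg (hp i) (softmax_pos _ _ j).le, fun i => ?_,
    sum_gibbsPlan_col γ M p g⟩
  simp only [gibbsPlan_apply, ← mul_sum, sum_softmax, mul_one]

lemma HstarGrad_mem_simplex (γ : ℝ) (M : Matrix (Fin n) (Fin s) ℝ) (hp : p ∈ simplex n)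
    (g : Fin s → ℝ) : HstarGrad γ M p g ∈ simplex s :=
  mem_simplex_of_mem_transportPolytope hp (gibbsPlan_mem_transportPolytope γ M hp.1 g)

lemma sub_frob_sub_entropy_le (hγ : 0 < γ) (M : Matrix (Fin n) (Fin s) ℝ) (g : Fin s → ℝ)
    {T : Matrix (Fin n) (Fin s) ℝ} (hT : T ∈ transportPolytope p q) :
    (∑ j, g j * q j) - (frob T M - γ * entropy T) ≤ conjugateFormula γ M p g := by
  rw [sub_frob_sub_entropy_eq_sum_freeEnergy γ M g hT]
  exact sum_le_sum fun i _ => freeEnergy_le hγ _ (hT.1 i) (hT.2.1 i)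

lemma sub_frob_sub_entropy_eq_iff (hγ : 0 < γ) (M : Matrix (Fin n) (Fin s) ℝ) (g : Fin s → ℝ)
    {T : Matrix (Fin n) (Fin s) ℝ} (hT : T ∈ transportPolytope p q) :
    (∑ j, g j * q j) - (frob T M - γ * entropy T) = conjugateFormula γ M p g ↔
      T = gibbsPlan γ M p g := by
  have h_row_le (i : Fin n) : freeEnergy γ (g - M.row i) (T.row i) ≤
      p i * logSumExp γ (g - M.row i) + γ * Real.negMulLog (p i) :=
    freeEnergy_le hγ _ (hT.1 i) (hT.2.1 i)
  have h_row_eq_iff (i : Fin n) : freeEnergy γ (g - M.row i) (T.row i) =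
      p i * logSumExp γ (g - M.row i) + γ * Real.negMulLog (p i) ↔
        T.row i = (gibbsPlan γ M p g).row i :=
    freeEnergy_eq_iff hγ _ (hT.1 i) (hT.2.1 i)
  rw [sub_frob_sub_entropy_eq_sum_freeEnergy γ M g hT, conjugateFormula,
    sum_eq_sum_iff_of_le fun i _ => h_row_le i]
  simp only [mem_univ, true_imp_iff, h_row_eq_iff]
  exact ⟨Matrix.ext_row, fun h_eq i => h_eq ▸ rfl⟩

lemma sub_Wsmooth_le (hγ : 0 < γ) (M : Matrix (Fin n) (Fin s) ℝ) (g : Fin s → ℝ)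
    (hp : p ∈ simplex n) (hq : q ∈ simplex s) :
    (∑ j, g j * q j) - Wsmooth γ M p q ≤ conjugateFormula γ M p g := by
  obtain ⟨T, hT, hTW⟩ := (isLeast_Wsmooth γ M hp hq).1
  exact hTW ▸ sub_frob_sub_entropy_le hγ M g hT

lemma sub_Wsmooth_eq_iff (hγ : 0 < γ) (M : Matrix (Fin n) (Fin s) ℝ) (g : Fin s → ℝ)
    (hp : p ∈ simplex n) (hq : q ∈ simplex s) :
    (∑ j, g j * q j) - Wsmooth γ M p q = conjugateFormula γ M p g ↔ q = HstarGrad γ M p g := by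
  constructor
  · intro h_eq
    obtain ⟨T, hT, hTW⟩ := (isLeast_Wsmooth γ M hp hq).1
    rw [← hTW] at h_eq
    have hT_gibbs : T = gibbsPlan γ M p g := (sub_frob_sub_entropy_eq_iff hγ M g hT).1 h_eq
    funext j
    rw [← hT.2.2 j, hT_gibbs, sum_gibbsPlan_col]
  · rintro rfl
    have h_mem := gibbsPlan_mem_transportPolytope γ M hp.1 g
    refine (sub_Wsmooth_le hγ M g hp hq).antisymm ?_
    rw [← (sub_frob_sub_entropy_eq_iff hγ M g h_mem).2 rfl]
    exact sub_le_sub_left ((isLeast_Wsmooth γ M hp hq).2 ⟨_, h_mem, rfl⟩) _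

theorem Hstar_eq_conjugateFormula (hγ : 0 < γ) (M : Matrix (Fin n) (Fin s) ℝ)
    (hp : p ∈ simplex n) : Hstar γ M p = conjugateFormula γ M p := by
  funext g
  have h_mem := HstarGrad_mem_simplex γ M hp g
  refine IsGreatest.csSup_eq ⟨⟨_, h_mem, (sub_Wsmooth_eq_iff hγ M g hp h_mem).2 rfl⟩, ?_⟩
  rintro _ ⟨q, hq, rfl⟩
  exact sub_Wsmooth_le hγ M g hp hq

theorem hasFDerivAt_conjugateFormula (hγ : γ ≠ 0) (M : Matrix (Fin n) (Fin s) ℝ)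
    (p : Fin n → ℝ) (g : Fin s → ℝ) :
    HasFDerivAt (conjugateFormula γ M p)
      (∑ j, HstarGrad γ M p g j • (ContinuousLinearMap.proj j : (Fin s → ℝ) →L[ℝ] ℝ)) g := by
  have hasFDerivAt_rows : HasFDerivAt (conjugateFormula γ M p)
      (∑ i, p i • ∑ j, softmax γ (g - M.row i) j •
        (ContinuousLinearMap.proj j : (Fin s → ℝ) →L[ℝ] ℝ)) g :=
    HasFDerivAt.fun_sum fun i _ => HasFDerivAt.add_const _ <|
      ((hasFDerivAt_comp_sub (M.row i)).2 (hasFDerivAt_logSumExp hγ _)).const_mul (p i)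
  refine hasFDerivAt_rows.congr_fderiv ?_
  simp only [← sum_gibbsPlan_col, gibbsPlan_apply, sum_smul, smul_sum, smul_smul]
  exact sum_comm

end Conjugate

theorem Hstar_hasGradient_general
    (n s : ℕ) (hs : 0 < s)
    (γ : ℝ) (hγ : 0 < γ)
    (M : Matrix (Fin n) (Fin s) ℝ)
    (p : Fin n → ℝ) (hp : p ∈ simplex n)
    (g : Fin s → ℝ) :
    HasFDerivAt (Hstar γ M p)
      (LinearMap.toContinuousLinearMap
        (∑ j, HstarGrad γ M p g j •
          (LinearMap.proj j : ((Fin s → ℝ) →ₗ[ℝ] ℝ)))) g ∧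
    HstarGrad γ M p g ∈ simplex s ∧
    (∑ j, g j * HstarGrad γ M p g j) - Wsmooth γ M p (HstarGrad γ M p g)
      = Hstar γ M p g ∧
    ∀ q ∈ simplex s,
      (∑ j, g j * q j) - Wsmooth γ M p q = Hstar γ M p g → q = HstarGrad γ M p g := by
  have : Nonempty (Fin s) := Fin.pos_iff_nonempty.1 hs
  have h_mem := HstarGrad_mem_simplex γ M hp g
  rw [Hstar_eq_conjugateFormula hγ M hp]
  refine ⟨?_, h_mem, (sub_Wsmooth_eq_iff hγ M g hp h_mem).2 rfl,
    fun q hq => (sub_Wsmooth_eq_iff hγ M g hp hq).1⟩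
  refine (hasFDerivAt_conjugateFormula hγ.ne' M p g).congr_fderiv ?_
  ext v
  simp

/-- H_p* is differentiable everywhere, with gradient
∇H_p*(g) = α ⊙ Kᵀ(p ⊘ Kα); moreover this gradient is the unique maximizer over Σ_s of
q ↦ ⟨g,q⟩ − W_γ(p,q). -/
theorem Hstar_hasGradient
    (n s : ℕ) (hn : 0 < n) (hs : 0 < s)
    (γ : ℝ) (hγ : 0 < γ)
    (M : Matrix (Fin n) (Fin s) ℝ) (hM : ∀ i j, 0 ≤ M i j)
    (p : Fin n → ℝ) (hp : p ∈ simplex n) (hp' : ∀ i, 0 < p i)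
    (g : Fin s → ℝ) :
    HasFDerivAt (Hstar γ M p)
      (LinearMap.toContinuousLinearMap
        (∑ j, HstarGrad γ M p g j •
          (LinearMap.proj j : ((Fin s → ℝ) →ₗ[ℝ] ℝ)))) g ∧
    HstarGrad γ M p g ∈ simplex s ∧
    (∑ j, g j * HstarGrad γ M p g j) - Wsmooth γ M p (HstarGrad γ M p g)
      = Hstar γ M p g ∧
    ∀ q ∈ simplex s,
      (∑ j, g j * q j) - Wsmooth γ M p q = Hstar γ M p g → q = HstarGrad γ M p g := by
  exact Hstar_hasGradient_general n s hs γ hγ M p hp g
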